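/- Let E be an elliptic curve over 𝔽_p with #E(𝔽_p) = p + 1 − a, and let τ, τ̄ be the roots of T² − aT + p. Then for every n ≥ 1, #E(𝔽_{p^n}) = p^n + 1 − (τⁿ + τ̄ⁿ). -/

import Mathlib

/-!
The proof goes through the zeta function of the affine curve, computed by counting ideals of the
coordinate ring `𝒪` of a Weierstrass curve of nonzero discriminant over a field `F` with `q`
elements. Write `deg I` for the dimension of `𝒪 / I` and `b_d` for the number of nonzero ideals of
degree `d`.

* `isDedekindDomain`: nonsingularity makes `𝒪` a Dedekind domain, so nonzero ideals factor uniquely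
  into primes and `deg` is additive on products (`deg_mul`).
* `ncard_effective`: for `d ≥ 2` one has `b_d = q^(d-1) (1 + b_1)`. The input is an explicit
  Riemann-Roch theorem. The functions `u(X) + v(X) Y` with `2 deg u ≤ m` and `2 deg v + 3 ≤ m` form
  a space `L W m` of dimension `m ≥ 1`, and they are the functions whose norm to `F[X]` has degree
  at most `m`, which is the degree of the principal ideal they generate. Counting generators shows
  that there are `q^(d-1)` principal ideals of degree `d`. For a nonprincipal ideal `I`, the space
  `I ∩ L W (deg I + 1)` is a line, whose generator defines an ideal `I P` with `deg P = 1`;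
  this sets up a bijection from which the nonprincipal ideals of degree `d` are `b_1 q^(d-1)` in
  number.
* `mul_ncard_effective`: unique factorization gives `d b_d = ∑_{n=1}^d N_n b_{d-n}`, where
  `N_n = ∑ deg M` over the primes `M` with `deg M ∣ n`. This is the logarithmic derivative of the
  Euler product of the zeta function `∑ b_d T^d`.
* `card_point`: affine points over an extension `K / F` of degree `n` are `F`-algebra homomorphisms
  `𝒪 → K`. Sorting these by their kernels, exactly `N_n` exist; the point at infinity adds one.

For `F = 𝔽_p` one has `b_0 = 1` and `b_1 = N_1 = p - a`, whence
`∑ b_d T^d = (1 - aT + pT²) / (1 - pT) = (1 - τT)(1 - τ'T) / (1 - pT)`. The logarithmic derivative of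
the right-hand side has coefficients `p^n - τ^n - τ'^n` (`recursion_of_zeta`), and the relation above
determines the `N_n` from the `b_d` (`eq_of_recursion`), so `N_n = p^n - τ^n - τ'^n`.
-/

namespace PointCount

open Polynomial WeierstrassCurve.Affine
open scoped Polynomial.Bivariate

/-! ### The coordinate ring is a Dedekind domain -/

section Dedekind

variable {F : Type*} [Field F] {W : WeierstrassCurve F}

/-- The quadratic `Y² + (a₁X + a₃)Y - (X³ + a₂X² + a₄X + a₆)` cannot vanish modulo `m²` at
`Y = s`, for an irreducible `m`, while its `Y`-derivative vanishes modulo `m`: differentiating the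
first relation shows that the `X`-derivative vanishes modulo `m` too, so `(X, s)` would be a
singular point with coordinates in the field `F[X]/(m)`. -/
theorem not_singular_mod (hW : W.Δ ≠ 0) {m s t : F[X]} (hm : Irreducible m)
    (hE : s ^ 2 + (C W.a₁ * X + C W.a₃) * s - (X ^ 3 + C W.a₂ * X ^ 2 + C W.a₄ * X + C W.a₆)
      = m * t)
    (ht : m ∣ t) (hY : m ∣ 2 * s + (C W.a₁ * X + C W.a₃)) : False := by
  have : Fact (Irreducible m) := ⟨hm⟩
  have hX : m ∣ C W.a₁ * s - (3 * X ^ 2 + 2 * C W.a₂ * X + C W.a₄) := by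
    have h := congrArg derivative hE
    simp only [derivative_sub, derivative_add, derivative_mul, derivative_pow, derivative_X,
      derivative_C] at h
    obtain ⟨t', rfl⟩ := ht
    obtain ⟨u, hu⟩ := hY
    rw [derivative_mul] at h
    refine ⟨derivative m * t' + derivative m * t' + m * derivative t' - u * derivative s, ?_⟩
    have h3 : (C ((3 : ℕ) : F) : F[X]) = 3 := by rw [Nat.cast_ofNat]; exact map_ofNat C 3
    have h2 : (C ((2 : ℕ) : F) : F[X]) = 2 := by rw [Nat.cast_ofNat]; exact map_ofNat C 2
    rw [h3, h2] at h
    simp only [Nat.add_one_sub_one] at h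
    linear_combination h - derivative s * hu
  have key : ∀ f : F[X], m ∣ f ↔ AdjoinRoot.mk m f = 0 := fun f => AdjoinRoot.mk_eq_zero.symm
  have hE' : m ∣ s ^ 2 + (C W.a₁ * X + C W.a₃) * s -
      (X ^ 3 + C W.a₂ * X ^ 2 + C W.a₄ * X + C W.a₆) := ⟨t, hE⟩
  rw [key] at hX hY hE'
  have hΔ : (W.map (algebraMap F (AdjoinRoot m))).Δ ≠ 0 := by
    rw [WeierstrassCurve.map_Δ]
    exact (_root_.map_ne_zero _).mpr hW
  have hns := (equation_iff_nonsingular_of_Δ_ne_zero (x := AdjoinRoot.mk m X)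
    (y := AdjoinRoot.mk m s) hΔ).mp (by
      rw [equation_iff']
      simp only [map_sub, map_add, map_mul, map_pow, AdjoinRoot.mk_C] at hE'
      simp only [WeierstrassCurve.map, AdjoinRoot.algebraMap_eq]
      linear_combination hE')
  rw [nonsingular_iff'] at hns
  simp only [map_sub, map_add, map_mul, map_pow, AdjoinRoot.mk_C, map_ofNat] at hX hY
  simp only [WeierstrassCurve.map, AdjoinRoot.algebraMap_eq] at hns
  rcases hns.2 with h | h
  · exact h (by linear_combination hX)
  · exact h (by linear_combination hY)

local notation "𝒪" => CoordinateRing W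

/-- If `P = (m, g)` and `g g' = m t` with `g' ∉ P` or `t ∉ P`, then in the local ring at `P` one of
`m`, `g` is a multiple of the other, so the maximal ideal is principal. -/
theorem principal_of_relation {A : Type*} [CommRing A] (P : Ideal A) [P.IsPrime] {m g g' t : A}
    (hP : P = Ideal.span {m, g}) (h : g * g' = m * t) (hn : g' ∉ P ∨ t ∉ P) :
    (IsLocalRing.maximalIdeal (Localization.AtPrime P)).IsPrincipal := by
  set f := algebraMap A (Localization.AtPrime P)
  have hu : ∀ x, x ∉ P → IsUnit (f x) := fun x hx =>
    IsLocalization.map_units (Localization.AtPrime P) (⟨x, hx⟩ : P.primeCompl)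
  have h' : f g * f g' = f m * f t := by rw [← map_mul, h, map_mul]
  rw [← Localization.AtPrime.map_eq_maximalIdeal]
  have e : P.map (algebraMap A (Localization.AtPrime P)) = Ideal.span {f m, f g} := by
    rw [← Set.image_pair, ← Ideal.map_span]
    exact congrArg (Ideal.map f) hP
  rw [e]
  rcases hn with hn | hn
  · obtain ⟨u, hu⟩ := hu _ hn
    refine ⟨f m, ?_⟩
    rw [Ideal.submodule_span_eq, Ideal.span_insert, sup_eq_left,
      Ideal.span_singleton_le_span_singleton]
    refine ⟨f t * ↑u⁻¹, ?_⟩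
    rw [← mul_assoc, ← h', ← hu, mul_assoc, u.mul_inv, mul_one]
  · obtain ⟨u, hu⟩ := hu _ hn
    refine ⟨f g, ?_⟩
    rw [Ideal.submodule_span_eq, Ideal.span_insert, sup_eq_right,
      Ideal.span_singleton_le_span_singleton]
    refine ⟨f g' * ↑u⁻¹, ?_⟩
    rw [← mul_assoc, h', ← hu, mul_assoc, u.mul_inv, mul_one]

instance : Module.Finite F[X] 𝒪 := Module.Finite.of_basis (CoordinateRing.basis W)

instance : IsNoetherianRing 𝒪 := IsNoetherianRing.of_finite F[X] 𝒪

/-- Let `m` generate `P ∩ F[X]`. Either `P = (m)`, or `P = (m, Y - s)` for some `s : F[X]`; in the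
second case `(Y - s)(Y + s + a₁X + a₃)` is a multiple `m t` of `m`, and nonsingularity prevents
both `Y + s + a₁X + a₃` and `t` from lying in `P`. -/
theorem principal_maximalIdeal (hW : W.Δ ≠ 0) (P : Ideal 𝒪) (hP0 : P ≠ ⊥) [hP : P.IsPrime] :
    (IsLocalRing.maximalIdeal (Localization.AtPrime P)).IsPrincipal := by
  have hne : P.under F[X] ≠ ⊥ := P.under_ne_bot F[X] hP0
  have hpr : (P.under F[X]).IsPrime := inferInstance
  obtain ⟨m, hm⟩ := (IsPrincipalIdealRing.principal (P.under F[X])).principal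
  rw [Ideal.submodule_span_eq] at hm
  have hm0 : m ≠ 0 := by rintro rfl; exact hne (by simpa using hm)
  have hmirr : Irreducible m := by
    rw [hm] at hpr
    exact ((Ideal.span_singleton_prime hm0).mp hpr).irreducible
  have hmem : ∀ u : F[X], algebraMap F[X] 𝒪 u ∈ P ↔ m ∣ u := fun u => by
    rw [← Ideal.mem_span_singleton, ← hm]; rfl
  have halg : ∀ u : F[X], u • (1 : 𝒪) = algebraMap F[X] 𝒪 u := fun u =>
    (Algebra.algebraMap_eq_smul_one u).symm
  by_cases hall : ∀ u v : F[X], u • (1 : 𝒪) + v • CoordinateRing.mk W Y ∈ P → m ∣ v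
  · have hspan : P = Ideal.span {algebraMap F[X] 𝒪 m, 0} := by
      rw [Ideal.span_pair_comm, Ideal.span_insert_zero]
      apply le_antisymm
      · intro z hz
        obtain ⟨u, v, rfl⟩ := CoordinateRing.exists_smul_basis_eq z
        obtain ⟨v', rfl⟩ := hall u v hz
        have h1 : (m * v') • CoordinateRing.mk W Y ∈ P := by
          rw [Algebra.smul_def, map_mul, mul_assoc]
          exact P.mul_mem_right _ ((hmem m).mpr dvd_rfl)
        have h2 := (P.add_mem_iff_left h1).mp hz
        rw [halg, hmem] at h2
        obtain ⟨u', rfl⟩ := h2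
        rw [Ideal.mem_span_singleton]
        refine ⟨algebraMap F[X] 𝒪 u' + algebraMap F[X] 𝒪 v' * CoordinateRing.mk W Y, ?_⟩
        simp only [Algebra.smul_def, map_mul]
        ring
      · rw [Ideal.span_singleton_le_iff_mem]
        exact (hmem m).mpr dvd_rfl
    exact principal_of_relation P hspan (g' := 1) (t := 0) (by simp)
      (Or.inl ((Ideal.ne_top_iff_one P).mp hP.ne_top))
  · push Not at hall
    obtain ⟨u, v, huv, hv⟩ := hall
    obtain ⟨a, b, hab⟩ := (hmirr.coprime_iff_not_dvd.mpr hv)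
    -- `b` inverts `v` modulo `m`
    set s : F[X] := -(b * u) with hs
    have hmP : algebraMap F[X] 𝒪 m ∈ P := (hmem m).mpr dvd_rfl
    have hg : CoordinateRing.mk W Y - algebraMap F[X] 𝒪 s ∈ P := by
      have h1 : CoordinateRing.mk W Y - algebraMap F[X] 𝒪 s =
          algebraMap F[X] 𝒪 b * (u • (1 : 𝒪) + v • CoordinateRing.mk W Y) +
            algebraMap F[X] 𝒪 m * (algebraMap F[X] 𝒪 a * CoordinateRing.mk W Y) := by
        have := congrArg (algebraMap F[X] 𝒪) hab
        simp only [map_add, map_mul, map_one] at this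
        simp only [Algebra.smul_def, hs, map_neg, map_mul]
        linear_combination -CoordinateRing.mk W Y * this
      rw [h1]
      exact P.add_mem (P.mul_mem_left _ huv) (P.mul_mem_right _ hmP)
    have hspan : P = Ideal.span {algebraMap F[X] 𝒪 m, CoordinateRing.mk W Y - algebraMap F[X] 𝒪 s} := by
      apply le_antisymm
      · intro z hz
        obtain ⟨c, d, rfl⟩ := CoordinateRing.exists_smul_basis_eq z
        have h2 : algebraMap F[X] 𝒪 (c + d * s) ∈ P := by
          have : algebraMap F[X] 𝒪 (c + d * s) = c • (1 : 𝒪) + d • CoordinateRing.mk W Y -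
              algebraMap F[X] 𝒪 d * (CoordinateRing.mk W Y - algebraMap F[X] 𝒪 s) := by
            simp only [Algebra.smul_def, map_add, map_mul]; ring
          rw [this]
          exact P.sub_mem hz (P.mul_mem_left _ hg)
        obtain ⟨e, he⟩ := (hmem _).mp h2
        rw [Ideal.mem_span_pair]
        refine ⟨algebraMap F[X] 𝒪 e, algebraMap F[X] 𝒪 d, ?_⟩
        have := congrArg (algebraMap F[X] 𝒪) he
        simp only [map_add, map_mul] at this
        simp only [Algebra.smul_def]
        linear_combination -this
      · rw [Ideal.span_le]
        rintro z (rfl | rfl)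
        exacts [hmP, hg]
    set E : F[X] := s ^ 2 + (C W.a₁ * X + C W.a₃) * s -
      (X ^ 3 + C W.a₂ * X ^ 2 + C W.a₄ * X + C W.a₆) with hE
    have hrel : (CoordinateRing.mk W Y - algebraMap F[X] 𝒪 s) *
        (CoordinateRing.mk W Y + algebraMap F[X] 𝒪 (s + (C W.a₁ * X + C W.a₃))) =
          algebraMap F[X] 𝒪 (-E) := by
      have hY : CoordinateRing.mk W Y ^ 2 + algebraMap F[X] 𝒪 (C W.a₁ * X + C W.a₃) * CoordinateRing.mk W Y
          - algebraMap F[X] 𝒪 (X ^ 3 + C W.a₂ * X ^ 2 + C W.a₄ * X + C W.a₆) = 0 := by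
        have : CoordinateRing.mk W W.toAffine.polynomial = 0 := AdjoinRoot.mk_self
        change CoordinateRing.mk W (Y ^ 2 + C (C W.a₁ * X + C W.a₃) * Y -
          C (X ^ 3 + C W.a₂ * X ^ 2 + C W.a₄ * X + C W.a₆)) = 0 at this
        rw [map_sub, map_add, map_mul, map_pow] at this
        exact this
      simp only [hE, map_add, map_sub, map_neg, map_mul, map_pow] at hY ⊢
      linear_combination hY
    have hEm : m ∣ -E := by
      rw [← hmem, ← hrel]
      exact P.mul_mem_right _ hg
    obtain ⟨t, ht⟩ := hEm
    refine principal_of_relation P hspan (g' := _) (t := algebraMap F[X] 𝒪 t)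
      (hrel.trans (by rw [ht, map_mul])) ?_
    by_contra! hcon
    obtain ⟨h1, h2⟩ := hcon
    refine not_singular_mod hW hmirr (s := s) (t := -t) (by rw [← hE]; linear_combination -ht)
      (by rw [dvd_neg]; exact (hmem t).mp h2) ?_
    rw [← hmem]
    have := P.sub_mem h1 hg
    convert this using 1
    simp only [map_add, map_mul, map_ofNat]
    ring

/-- The coordinate ring is Noetherian with discrete valuation rings as local rings. -/
theorem isDedekindDomain (hW : W.Δ ≠ 0) : IsDedekindDomain 𝒪 := by
  have : IsDedekindDomainDvr 𝒪 :=
    { (inferInstance : IsNoetherianRing 𝒪) with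
      is_dvr_at_nonzero_prime := fun P hP0 hP =>
        ((IsDiscreteValuationRing.TFAE (Localization.AtPrime P)
          (IsLocalization.AtPrime.not_isField 𝒪 hP0 (Localization.AtPrime P))).out 4 0).mp
          (principal_maximalIdeal hW P hP0) }
  infer_instance

end Dedekind

/-! ### Degrees of ideals and Riemann-Roch spaces -/

section Degree

variable {F : Type*} [Field F] {W : WeierstrassCurve F}

local notation "𝒪" => CoordinateRing W

/-- The degree of an ideal, seen as an effective divisor: the `F`-dimension of the quotient ring.
The zero ideal, whose quotient is infinite-dimensional, has the junk degree `0`. -/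
noncomputable def deg (I : Ideal 𝒪) : ℕ := Module.finrank F (𝒪 ⧸ I)

theorem finite_quotient {I : Ideal 𝒪} (hI : I ≠ ⊥) : Module.Finite F (𝒪 ⧸ I) := by
  classical
  have e := Ideal.quotientEquivDirectSum F (CoordinateRing.basis W) hI
  exact Module.Finite.equiv e.symm

theorem deg_span {f : 𝒪} (hf : f ≠ 0) :
    deg (Ideal.span {f}) = (Algebra.norm F[X] f).natDegree :=
  finrank_quotient_span_eq_natDegree_norm (CoordinateRing.basis W) hf

theorem norm_ne_zero {f : 𝒪} (hf : f ≠ 0) : Algebra.norm F[X] f ≠ 0 :=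
  (Algebra.norm_ne_zero_iff_of_basis (CoordinateRing.basis W)).mpr hf

theorem deg_top : deg (⊤ : Ideal 𝒪) = 0 :=
  Module.finrank_zero_of_subsingleton

theorem eq_top_of_deg_eq_zero {I : Ideal 𝒪} (hI : I ≠ ⊥) (h : deg I = 0) : I = ⊤ := by
  have := finite_quotient hI
  rw [← Ideal.Quotient.subsingleton_iff]
  exact Module.finrank_zero_iff.mp h

theorem eq_of_le_of_deg {I J : Ideal 𝒪} (hI : I ≠ ⊥) (h : I ≤ J) (hd : deg I ≤ deg J) : I = J := by
  have := finite_quotient hI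
  have hJ : J ≠ ⊥ := fun hJ => hI (le_bot_iff.mp (hJ ▸ h))
  have := finite_quotient hJ
  have hs : Function.Surjective (Ideal.Quotient.factorₐ F h) := Ideal.Quotient.factor_surjective h
  have he : Module.finrank F (𝒪 ⧸ I) = Module.finrank F (𝒪 ⧸ J) :=
    le_antisymm hd (LinearMap.finrank_le_finrank_of_surjective
      (f := (Ideal.Quotient.factorₐ F h).toLinearMap) hs)
  have hi := (LinearMap.injective_iff_surjective_of_finrank_eq_finrank he
    (f := (Ideal.Quotient.factorₐ F h).toLinearMap)).mpr hs
  refine le_antisymm h fun x hx => ?_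
  rw [← Ideal.Quotient.eq_zero_iff_mem]
  apply hi
  simpa [Ideal.Quotient.eq_zero_iff_mem] using hx

theorem deg_le_deg {I J : Ideal 𝒪} (hI : I ≠ ⊥) (h : I ≤ J) : deg J ≤ deg I := by
  have := finite_quotient hI
  exact LinearMap.finrank_le_finrank_of_surjective
      (f := (Ideal.Quotient.factorₐ F h).toLinearMap) (Ideal.Quotient.factor_surjective h)

/-- No regular function has a single simple pole at infinity: the curve is not rational. -/
theorem deg_span_ne_one {f : 𝒪} (hf : f ≠ 0) : deg (Ideal.span {f}) ≠ 1 := by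
  rw [deg_span hf]
  exact CoordinateRing.natDegree_norm_ne_one f

/-- The expression `(u, v) ↦ u + v Y` of a regular function in the basis `1, Y` over `F[X]`. -/
noncomputable def coords : (F[X] × F[X]) →ₗ[F] 𝒪 where
  toFun u := u.1 • (1 : 𝒪) + u.2 • CoordinateRing.mk W Y
  map_add' u v := by simp only [Prod.fst_add, Prod.snd_add, add_smul]; ring
  map_smul' c u := by simp only [Prod.smul_fst, Prod.smul_snd, smul_assoc, RingHom.id_apply, smul_add]

theorem coords_injective : Function.Injective (coords (W := W)) := by
  rw [← LinearMap.ker_eq_bot, LinearMap.ker_eq_bot']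
  rintro ⟨u, v⟩ h
  obtain ⟨rfl, rfl⟩ := CoordinateRing.smul_basis_eq_zero h
  rfl

instance (n : ℕ) : Module.Finite F (degreeLT F n) := Module.Finite.equiv (degreeLTEquiv F n).symm

/-- The restriction of `coords` to pairs `(u, v)` with `2 deg u ≤ m` and `2 deg v + 3 ≤ m`. For `m = 0`
the truncated subtraction still yields the correct condition `v = 0`. -/
noncomputable def coordsLT (m : ℕ) :
    (degreeLT F (m / 2 + 1) × degreeLT F ((m - 1) / 2)) →ₗ[F] 𝒪 :=
  coords ∘ₗ ((degreeLT F (m / 2 + 1)).subtype.prodMap (degreeLT F ((m - 1) / 2)).subtype)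

theorem coordsLT_injective (m : ℕ) : Function.Injective (coordsLT (W := W) m) :=
  coords_injective.comp (Function.Injective.prodMap Subtype.val_injective Subtype.val_injective)

variable (W) in
/-- The Riemann-Roch space `L(m∞)` of functions regular on the affine curve, with a pole of order
at most `m` at infinity. -/
noncomputable def L (m : ℕ) : Submodule F 𝒪 := LinearMap.range (coordsLT m)

theorem coords_mem_L {m : ℕ} {u v : F[X]} :
    coords (u, v) ∈ L W m ↔ u ∈ degreeLT F (m / 2 + 1) ∧ v ∈ degreeLT F ((m - 1) / 2) := by
  constructor
  · rintro ⟨⟨a, b⟩, h⟩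
    have h' := coords_injective h
    simp only [LinearMap.prodMap_apply, Submodule.subtype_apply, Prod.mk.injEq] at h'
    exact ⟨h'.1 ▸ a.2, h'.2 ▸ b.2⟩
  · rintro ⟨hu, hv⟩
    exact ⟨(⟨u, hu⟩, ⟨v, hv⟩), rfl⟩

/-- The order of the pole at infinity of `z` is the degree of its norm to `F[X]`. -/
theorem mem_L {m : ℕ} {z : 𝒪} : z ∈ L W m ↔ (Algebra.norm F[X] z).degree ≤ m := by
  obtain ⟨u, v, rfl⟩ := CoordinateRing.exists_smul_basis_eq z
  have : u • (1 : 𝒪) + v • CoordinateRing.mk W Y = coords (u, v) := rfl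
  rw [this, coords_mem_L, ← this,
    CoordinateRing.degree_norm_smul_basis, mem_degreeLT, mem_degreeLT, max_le_iff]
  refine and_congr ?_ ?_
  · rcases eq_or_ne u 0 with rfl | hu
    · simp
    · rw [degree_eq_natDegree hu]
      rw [two_nsmul]
      norm_cast
      omega
  · rcases eq_or_ne v 0 with rfl | hv
    · simp
    · rw [degree_eq_natDegree hv]
      rw [two_nsmul]
      norm_cast
      omega

theorem mem_L_iff_deg {m : ℕ} {z : 𝒪} (hz : z ≠ 0) : z ∈ L W m ↔ deg (Ideal.span {z}) ≤ m := by
  rw [mem_L, deg_span hz, natDegree_le_iff_degree_le]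

instance (m : ℕ) : Module.Finite F (L W m) := by
  rw [L]; infer_instance

/-- Riemann-Roch for the divisor `m∞` on a curve of genus one. -/
theorem finrank_L {m : ℕ} (hm : 1 ≤ m) : Module.finrank F (L W m) = m := by
  rw [L, LinearMap.finrank_range_of_inj (coordsLT_injective m), Module.finrank_prod,
    (degreeLTEquiv F _).finrank_eq, (degreeLTEquiv F _).finrank_eq]
  simp only [Module.finrank_fin_fun]
  omega

theorem one_mem_L (m : ℕ) : (1 : 𝒪) ∈ L W m := by
  rw [mem_L, map_one, degree_one]
  exact_mod_cast Nat.zero_le m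

theorem L_mono {m n : ℕ} (h : m ≤ n) : L W m ≤ L W n := fun z hz => by
  rw [mem_L] at hz ⊢
  exact hz.trans (by exact_mod_cast h)

/-- The space `L(m∞ - D)`, where `D` is the effective divisor of the ideal `I`. -/
noncomputable def LI (I : Ideal 𝒪) (m : ℕ) : Submodule F (L W m) :=
  (I.restrictScalars F).comap (L W m).subtype

theorem mem_LI {I : Ideal 𝒪} {m : ℕ} {z : L W m} : z ∈ LI I m ↔ (z : 𝒪) ∈ I := Iff.rfl

/-- The reduction `L(m∞) → 𝒪 / I`, whose kernel is `LI I m`. -/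
noncomputable def toQuot (I : Ideal 𝒪) (m : ℕ) : L W m →ₗ[F] 𝒪 ⧸ I :=
  (Ideal.Quotient.mkₐ F I).toLinearMap.comp (L W m).subtype

theorem ker_toQuot (I : Ideal 𝒪) (m : ℕ) : LinearMap.ker (toQuot I m) = LI I m := by
  ext z
  rw [LinearMap.mem_ker, mem_LI]
  exact Ideal.Quotient.eq_zero_iff_mem

theorem le_finrank_LI {I : Ideal 𝒪} (hI : I ≠ ⊥) {m : ℕ} (hm : 1 ≤ m) :
    m ≤ Module.finrank F (LI I m) + deg I := by
  have := finite_quotient hI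
  have h := LinearMap.finrank_range_add_finrank_ker (toQuot I m)
  rw [finrank_L hm, ker_toQuot] at h
  have := Submodule.finrank_le (LinearMap.range (toQuot I m))
  rw [deg]
  omega

/-- When `deg I ≤ 1`, the reduction `L(m∞) → 𝒪 / I` is surjective because the constants already are
onto, so the dimension of the kernel is exact. -/
theorem finrank_LI {I : Ideal 𝒪} (hI : I ≠ ⊥) (h1 : deg I ≤ 1) {m : ℕ} (hm : 1 ≤ m) :
    Module.finrank F (LI I m) + deg I = m := by
  have := finite_quotient hI
  have h := LinearMap.finrank_range_add_finrank_ker (toQuot I m)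
  rw [finrank_L hm, ker_toQuot] at h
  rcases Nat.eq_zero_or_pos (deg I) with h0 | h0
  · have := Submodule.finrank_le (LinearMap.range (toQuot I m))
    change _ ≤ deg I at this
    omega
  · have hd : deg I = 1 := by omega
    have hne : toQuot I m ⟨1, one_mem_L m⟩ ≠ 0 := by
      intro h
      have : (1 : 𝒪) ∈ I := Ideal.Quotient.eq_zero_iff_mem.mp h
      rw [(Ideal.eq_top_iff_one I).mpr this, deg_top] at hd
      omega
    have : Module.finrank F (LinearMap.range (toQuot I m)) ≠ 0 := by
      rw [Ne, Submodule.finrank_eq_zero]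
      intro h
      rw [LinearMap.range_eq_bot] at h
      exact hne (by rw [h]; rfl)
    have := Submodule.finrank_le (LinearMap.range (toQuot I m))
    change _ ≤ deg I at this
    omega

/-- A dimension count: `L((deg I + 1)∞)` has dimension greater than `deg I`, so it contains a nonzero
element of `I`. -/
theorem exists_mem_deg_le {I : Ideal 𝒪} (hI : I ≠ ⊥) :
    ∃ z ∈ I, z ≠ 0 ∧ deg (Ideal.span {z}) ≤ deg I + 1 := by
  have h := le_finrank_LI hI (m := deg I + 1) (by omega)
  have : Nontrivial (LI I (deg I + 1)) := Module.nontrivial_of_finrank_pos (R := F) (by omega)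
  obtain ⟨z, hz⟩ := exists_ne (0 : LI I (deg I + 1))
  have hz' : ((z : L W (deg I + 1)) : 𝒪) ≠ 0 := fun h => hz (Subtype.ext (Subtype.ext h))
  exact ⟨z, z.2, hz', (mem_L_iff_deg hz').mp z.1.2⟩

/-- For `I` nonprincipal, a function in `I` with divisor of degree `deg I + 1` is unique up to scalars.
Subtracting from `y` a multiple of `x` gives an element of `I ∩ L((deg I)∞)`, which would generate
`I` if it were nonzero. -/
theorem span_eq_of_nonprincipal {I : Ideal 𝒪} (hI : I ≠ ⊥) (hn : ∀ z, Ideal.span {z} ≠ I)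
    {x y : 𝒪} (hx : x ∈ I) (hy : y ∈ I)
    (hdx : deg (Ideal.span {x}) = deg I + 1) (hdy : deg (Ideal.span {y}) = deg I + 1)
    (hx0 : x ≠ 0) (hy0 : y ≠ 0) :
    Ideal.span {x} = Ideal.span {y} := by
  have hd0 : 1 ≤ deg I := by
    by_contra! h
    exact hn 1 (by rw [Ideal.span_singleton_one, eq_top_of_deg_eq_zero hI (by omega)])
  have hxL : x ∈ L W (deg I + 1) := (mem_L_iff_deg hx0).mpr hdx.le
  have hyL : y ∈ L W (deg I + 1) := (mem_L_iff_deg hy0).mpr hdy.le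
  have hxL' : x ∉ L W (deg I) := fun h => by have := (mem_L_iff_deg hx0).mp h; omega
  have hle : L W (deg I) ⊔ Submodule.span F {x} ≤ L W (deg I + 1) :=
    sup_le (L_mono (by omega)) (by rwa [Submodule.span_singleton_le_iff_mem])
  have hlt : L W (deg I) < L W (deg I) ⊔ Submodule.span F {x} := by
    refine lt_of_le_of_ne le_sup_left fun h => hxL' ?_
    rw [h]
    exact Submodule.mem_sup_right (Submodule.mem_span_singleton_self x)
  have hfin : Module.Finite F ↥(L W (deg I) ⊔ Submodule.span F {x}) := inferInstance
  have h1 := Submodule.finrank_lt_finrank_of_lt hlt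
  have heq := Submodule.eq_of_le_of_finrank_le hle (by
    rw [finrank_L (by omega)]; rw [finrank_L hd0] at h1; omega)
  rw [← heq, Submodule.mem_sup] at hyL
  obtain ⟨a, ha, b, hb, hab⟩ := hyL
  obtain ⟨c, rfl⟩ := Submodule.mem_span_singleton.mp hb
  have haI : a ∈ I := by
    have : a = y - c • x := by rw [← hab]; ring
    rw [this, Algebra.smul_def]
    exact I.sub_mem hy (I.mul_mem_left _ hx)
  have ha0 : a = 0 := by
    by_contra ha0
    have h2 := (mem_L_iff_deg ha0).mp ha
    exact hn a (eq_of_le_of_deg (by simpa using ha0) (by simpa using haI) h2)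
  rw [ha0, zero_add] at hab
  have hc : c ≠ 0 := by rintro rfl; simp at hab; exact hy0 hab.symm
  rw [← hab, Algebra.smul_def]
  have hu : IsUnit (algebraMap F 𝒪 c) := (IsUnit.mk0 c hc).map _
  exact (Ideal.span_singleton_mul_left_unit hu x).symm

end Degree

/-! ### Counting ideals of given degree -/

section Counting

variable {F : Type*} [Field F] {W : WeierstrassCurve F}

local notation "𝒪" => CoordinateRing W

variable (W) in
/-- The set of effective divisors of degree `d` on the affine curve, as ideals. -/
def effective (d : ℕ) : Set (Ideal 𝒪) := {I | I ≠ ⊥ ∧ deg I = d}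

theorem effective_zero : effective W 0 = {⊤} := by
  ext I
  constructor
  · rintro ⟨hI, h⟩
    exact eq_top_of_deg_eq_zero hI h
  · rintro rfl
    exact ⟨top_ne_bot, deg_top⟩

/-- The set of principal ideals of degree `k` contained in `P`. -/
def principal (P : Ideal 𝒪) (k : ℕ) : Set (Ideal 𝒪) :=
  {J | J ≠ ⊥ ∧ (∃ z, Ideal.span {z} = J) ∧ J ≤ P ∧ deg J = k}

/-- Units have no pole at infinity, so they are constants because `L(∞)` is one-dimensional. -/
theorem exists_algebraMap_of_isUnit {u : 𝒪} (hu : IsUnit u) :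
    ∃ c : F, c ≠ 0 ∧ algebraMap F 𝒪 c = u := by
  have hu0 : u ≠ 0 := hu.ne_zero
  have hL : u ∈ L W 1 := by
    rw [mem_L_iff_deg hu0, Ideal.span_singleton_eq_top.mpr hu, deg_top]
    omega
  have hle : Submodule.span F {(1 : 𝒪)} ≤ L W 1 := by
    rw [Submodule.span_singleton_le_iff_mem]
    exact one_mem_L 1
  have := Submodule.eq_of_le_of_finrank_le hle (by
    rw [finrank_L le_rfl, finrank_span_singleton one_ne_zero])
  rw [← this] at hL
  obtain ⟨c, hc⟩ := Submodule.mem_span_singleton.mp hL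
  rw [← Algebra.algebraMap_eq_smul_one] at hc
  refine ⟨c, ?_, hc⟩
  rintro rfl
  rw [map_zero] at hc
  exact hu0 hc.symm

theorem cardQuot_eq {I : Ideal 𝒪} (hI : I ≠ ⊥) : Submodule.cardQuot I = Nat.card F ^ deg I := by
  have := finite_quotient hI
  exact Module.natCard_eq_pow_finrank (K := F) (V := 𝒪 ⧸ I)

theorem ncard_LI {P : Ideal 𝒪} (hP : P ≠ ⊥) (h1 : deg P ≤ 1) {m : ℕ} (hm : 1 ≤ m) :
    {z : 𝒪 | z ∈ P ∧ z ∈ L W m}.ncard = Nat.card F ^ (m - deg P) := by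
  have h : m - deg P = Module.finrank F (LI P m) := by
    have := finrank_LI hP h1 hm
    omega
  rw [h, ← Module.natCard_eq_pow_finrank (K := F) (V := LI P m), ← Nat.card_coe_set_eq]
  exact Nat.card_congr
    { toFun := fun z => ⟨⟨z.1, z.2.2⟩, z.2.1⟩
      invFun := fun z => ⟨z.1.1, z.2, z.1.2⟩
      left_inv := fun _ => rfl
      right_inv := fun _ => rfl }

/-- A degree-one prime is not principal, so `I` and `I P` cannot both be principal. -/
theorem nonprincipal_of_mul [IsDedekindDomain 𝒪] {I P : Ideal 𝒪} (hI : I ≠ ⊥)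
    (hP : P ∈ effective W 1) {z : 𝒪} (hz : Ideal.span {z} = I * P) (x : 𝒪) :
    Ideal.span {x} ≠ I := by
  rintro rfl
  have hx : x ≠ 0 := by simpa using hI
  have hzx : z ∈ Ideal.span {x} := Ideal.mul_le_left (hz ▸ Ideal.mem_span_singleton_self z)
  obtain ⟨w, rfl⟩ := Ideal.mem_span_singleton.mp hzx
  rw [← Ideal.span_singleton_mul_span_singleton] at hz
  have hw : Ideal.span {w} = P := mul_left_cancel₀ (by simpa using hx) hz
  have hw0 : w ≠ 0 := by
    rintro rfl
    exact hP.1 (by rw [← hw]; simp)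
  exact deg_span_ne_one hw0 (by rw [hw]; exact hP.2)

variable [Finite F]

/-- For a finite base field, additivity of the degree is multiplicativity of the absolute norm. -/
theorem deg_mul [IsDedekindDomain 𝒪] {I J : Ideal 𝒪} (hI : I ≠ ⊥) (hJ : J ≠ ⊥) :
    deg (I * J) = deg I + deg J := by
  have : Infinite 𝒪 := Infinite.of_injective _ coords_injective
  have h : Submodule.cardQuot (I * J) = Submodule.cardQuot I * Submodule.cardQuot J :=
    UniqueFactorizationMonoid.multiplicative_of_coprime Submodule.cardQuot I J
      (Submodule.cardQuot_bot _ _)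
      (fun {I J} hI => by simp [Ideal.isUnit_iff.mp hI, Ideal.mul_top])
      (fun {I} i hI =>
        have : Ideal.IsPrime I := Ideal.isPrime_of_prime hI
        cardQuot_pow_of_prime hI.ne_zero)
      fun {I J} hIJ => cardQuot_mul_of_coprime <| Ideal.isCoprime_iff_sup_eq.mpr
        (Ideal.isUnit_iff.mp
          (hIJ (Ideal.dvd_iff_le.mpr le_sup_left) (Ideal.dvd_iff_le.mpr le_sup_right)))
  rw [cardQuot_eq hI, cardQuot_eq hJ, cardQuot_eq (mul_ne_zero hI hJ), ← pow_add] at h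
  exact Nat.pow_right_injective (Finite.one_lt_card (α := F)) h

theorem deg_pow [IsDedekindDomain 𝒪] {I : Ideal 𝒪} (hI : I ≠ ⊥) (n : ℕ) :
    deg (I ^ n) = n * deg I := by
  induction n with
  | zero => rw [pow_zero, Ideal.one_eq_top, deg_top, zero_mul]
  | succ n ih => rw [pow_succ, deg_mul (pow_ne_zero n hI) hI, ih]; ring

/-- Every ideal of degree `d` divides one of the finitely many nonzero elements of `L((d+1)∞)`. -/
theorem effective_finite [IsDedekindDomain 𝒪] (d : ℕ) : (effective W d).Finite := by
  have : Finite (L W (d + 1)) := Module.finite_of_finite F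
  have hfin : {z : 𝒪 | z ∈ L W (d + 1) ∧ z ≠ 0}.Finite :=
    (Set.toFinite (L W (d + 1) : Set 𝒪)).subset fun z hz => hz.1
  have : (⋃ z ∈ {z : 𝒪 | z ∈ L W (d + 1) ∧ z ≠ 0}, {I : Ideal 𝒪 | I ∣ Ideal.span {z}}).Finite := by
    refine hfin.biUnion fun z hz => ?_
    exact @Set.toFinite _ _ (@Finite.of_fintype _
      (UniqueFactorizationMonoid.fintypeSubtypeDvd (Ideal.span {z}) (by simpa using hz.2)))
  refine this.subset ?_
  rintro I ⟨hI, rfl⟩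
  obtain ⟨z, hz, hz0, hd⟩ := exists_mem_deg_le hI
  simp only [Set.mem_iUnion]
  exact ⟨z, ⟨(mem_L_iff_deg hz0).mpr hd, hz0⟩, Ideal.dvd_iff_le.mpr (by simpa using hz)⟩

/-- A principal ideal of degree `k` inside `P` has `q - 1` generators, which are the elements of
`L(k∞) ∩ P` outside `L((k-1)∞)`. -/
theorem ncard_principal {P : Ideal 𝒪} (hP : P ≠ ⊥) (h1 : deg P ≤ 1) {k : ℕ} (hk : 2 ≤ k) :
    (principal P k).ncard = Nat.card F ^ (k - 1 - deg P) := by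
  classical
  set q := Nat.card F with hq
  have hq1 : 1 < q := Finite.one_lt_card
  set S : Set 𝒪 := {z | z ∈ P ∧ z ∈ L W k} \ {z | z ∈ P ∧ z ∈ L W (k - 1)} with hS
  have hsub : {z : 𝒪 | z ∈ P ∧ z ∈ L W (k - 1)} ⊆ {z | z ∈ P ∧ z ∈ L W k} :=
    fun z hz => ⟨hz.1, L_mono (by omega) hz.2⟩
  have hScard : S.ncard = q ^ (k - deg P) - q ^ (k - 1 - deg P) := by
    have hfin : {z : 𝒪 | z ∈ P ∧ z ∈ L W (k - 1)}.Finite := by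
      refine Set.finite_of_ncard_ne_zero ?_
      rw [ncard_LI hP h1 (by omega)]
      positivity
    rw [hS, Set.ncard_sdiff hsub hfin, ncard_LI hP h1 (by omega), ncard_LI hP h1 (by omega)]
  have hmem : ∀ z : 𝒪, z ∈ S ↔ z ≠ 0 ∧ z ∈ P ∧ deg (Ideal.span {z}) = k := by
    intro z
    rcases eq_or_ne z 0 with rfl | hz
    · simp [hS]
    · simp only [hS, Set.mem_sdiff, Set.mem_ofPred_eq, mem_L_iff_deg hz]
      constructor
      · rintro ⟨⟨h, h'⟩, h''⟩
        refine ⟨hz, h, ?_⟩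
        by_contra hne
        exact h'' ⟨h, by omega⟩
      · rintro ⟨-, h, h'⟩
        exact ⟨⟨h, h'.le⟩, fun h'' => by have := h''.2; omega⟩
  choose g hg using fun J : principal P k => J.2.2.1
  have hg0 : ∀ J, g J ≠ 0 := fun J h => J.2.1 (by rw [← hg J, h]; simp)
  have hspan : ∀ (c : Fˣ) (z : 𝒪), Ideal.span {algebraMap F 𝒪 c * z} = Ideal.span {z} :=
    fun c z => Ideal.span_singleton_mul_left_unit (c.isUnit.map _) z
  have hc0 : ∀ c : Fˣ, algebraMap F 𝒪 c ≠ 0 := fun c => (c.isUnit.map (algebraMap F 𝒪)).ne_zero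
  let f : Fˣ × principal P k → S := fun x => ⟨algebraMap F 𝒪 x.1 * g x.2, by
    rw [hmem, hspan, hg]
    refine ⟨mul_ne_zero (hc0 _) (hg0 _), P.mul_mem_left _ (x.2.2.2.2.1 ?_), x.2.2.2.2.2⟩
    exact (hg x.2).le (Ideal.mem_span_singleton_self _)⟩
  have hf : Function.Bijective f := by
    constructor
    · rintro ⟨c, J⟩ ⟨c', J'⟩ h
      have h : algebraMap F 𝒪 c * g J = algebraMap F 𝒪 c' * g J' := congrArg Subtype.val h
      have hJ : J = J' := by
        apply Subtype.ext
        rw [← hg J, ← hg J', ← hspan c (g J), ← hspan c' (g J'), h]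
      subst hJ
      have := mul_right_cancel₀ (hg0 J) h
      rw [Units.ext ((algebraMap F 𝒪).injective this)]
    · rintro ⟨z, hz⟩
      obtain ⟨hz0, hzP, hzk⟩ := (hmem z).mp hz
      let J : principal P k := ⟨Ideal.span {z}, by simpa using hz0, ⟨z, rfl⟩, by simpa using hzP, hzk⟩
      have h := hg J
      obtain ⟨u, hu⟩ := Ideal.span_singleton_eq_span_singleton.mp h
      obtain ⟨c, hc, hcu⟩ := exists_algebraMap_of_isUnit u.isUnit
      exact ⟨(Units.mk0 c hc, J), Subtype.ext (by
        change algebraMap F 𝒪 c * g J = z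
        rw [hcu, mul_comm, hu])⟩
  have hcard := Nat.card_congr (Equiv.ofBijective f hf)
  rw [Nat.card_prod, Nat.card_units, Nat.card_coe_set_eq, Nat.card_coe_set_eq, hScard, ← hq] at hcard
  have he : k - deg P = (k - 1 - deg P) + 1 := by omega
  rw [he, pow_succ, ← Nat.mul_sub_one, mul_comm] at hcard
  exact Nat.eq_of_mul_eq_mul_right (by omega) hcard

theorem principal_finite [IsDedekindDomain 𝒪] (P : Ideal 𝒪) (k : ℕ) : (principal P k).Finite :=
  (effective_finite k).subset fun _ hI => ⟨hI.1, hI.2.2.2⟩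

/-- Every nonprincipal ideal class contains the inverse of a rational point. -/
theorem exists_mul_principal [IsDedekindDomain 𝒪] {I : Ideal 𝒪} (hI : I ≠ ⊥)
    (hn : ∀ z, Ideal.span {z} ≠ I) :
    ∃ P ∈ effective W 1, ∃ z, Ideal.span {z} = I * P := by
  obtain ⟨z, hz, hz0, hd⟩ := exists_mem_deg_le hI
  have hle : Ideal.span {z} ≤ I := by simpa using hz
  obtain ⟨P, hP⟩ := Ideal.dvd_iff_le.mpr hle
  have hP0 : P ≠ ⊥ := by
    rintro rfl
    rw [Ideal.mul_bot] at hP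
    exact hz0 (by simpa using hP)
  refine ⟨P, ⟨hP0, ?_⟩, z, hP⟩
  have h := deg_mul hI hP0
  rw [← hP] at h
  have : deg P ≠ 0 := by
    intro h0
    rw [eq_top_of_deg_eq_zero hP0 h0, Ideal.mul_top] at hP
    exact hn z hP
  omega

/-- The principal ideals of degree `d` number `q^(d-1)`. The nonprincipal ones `I` correspond
bijectively to pairs `(P, J)` with `P` of degree one and `J = I P ≤ P` principal of degree `d + 1`;
for each `P` there are again `q^(d-1)` such `J`. -/
theorem ncard_effective [IsDedekindDomain 𝒪] {d : ℕ} (hd : 2 ≤ d) :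
    (effective W d).ncard =
      Nat.card F ^ (d - 1) + (effective W 1).ncard * Nat.card F ^ (d - 1) := by
  classical
  set N : Set (Ideal 𝒪) := effective W d \ principal ⊤ d with hN
  have hsub : principal (⊤ : Ideal 𝒪) d ⊆ effective W d := fun I hI => ⟨hI.1, hI.2.2.2⟩
  have hfin := effective_finite (W := W) d
  have h1 : N.ncard + (principal (⊤ : Ideal 𝒪) d).ncard = (effective W d).ncard :=
    Set.ncard_sdiff_add_ncard_of_subset hsub hfin
  rw [ncard_principal top_ne_bot (by rw [deg_top]; omega) hd, deg_top] at h1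
  have hNmem : ∀ I, I ∈ N ↔ (I ≠ ⊥ ∧ deg I = d) ∧ ∀ z, Ideal.span {z} ≠ I := by
    intro I
    constructor
    · rintro ⟨h, h'⟩
      exact ⟨h, fun z hz => h' ⟨h.1, ⟨z, hz⟩, le_top, h.2⟩⟩
    · rintro ⟨h, h'⟩
      exact ⟨h, fun h'' => by obtain ⟨z, hz⟩ := h''.2.1; exact h' z hz⟩
  choose! P hP z hz using fun (I : N) =>
    exists_mul_principal ((hNmem I).mp I.2).1.1 ((hNmem I).mp I.2).2
  have := (effective_finite (W := W) 1).fintype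
  have := fun Q : effective W 1 => (principal_finite (Q : Ideal 𝒪) (d + 1)).to_subtype
  let f : N → (Σ Q : effective W 1, principal (Q : Ideal 𝒪) (d + 1)) := fun I =>
    ⟨⟨P I, hP I⟩, ⟨I * P I, mul_ne_zero ((hNmem I).mp I.2).1.1 (hP I).1, ⟨z I, hz I⟩,
      Ideal.mul_le_right, by
        rw [deg_mul ((hNmem I).mp I.2).1.1 (hP I).1, ((hNmem I).mp I.2).1.2, (hP I).2]⟩⟩
  have hf : Function.Bijective f := by
    constructor
    · intro I I' h
      have h1 : P I = P I' := congrArg (fun x => (x.1 : Ideal 𝒪)) h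
      have h2 : (I : Ideal 𝒪) * P I = I' * P I' := congrArg (fun x => (x.2 : Ideal 𝒪)) h
      rw [← h1] at h2
      exact Subtype.ext (mul_right_cancel₀ (hP I).1 h2)
    · rintro ⟨⟨Q, hQ⟩, ⟨J, hJ0, ⟨x, rfl⟩, hJQ, hJd⟩⟩
      have hJQ' : Ideal.span {x} ≤ Q := hJQ
      obtain ⟨I, hI⟩ := Ideal.dvd_iff_le.mpr hJQ'
      rw [mul_comm] at hI
      have hI0 : I ≠ ⊥ := by
        rintro rfl
        rw [Ideal.bot_mul] at hI
        exact hJ0 hI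
      have hId : deg I = d := by
        have := deg_mul hI0 hQ.1
        rw [← hI, hJd, hQ.2] at this
        omega
      have hIn := nonprincipal_of_mul hI0 hQ hI
      let I' : N := ⟨I, (hNmem I).mpr ⟨⟨hI0, hId⟩, hIn⟩⟩
      have hz' : Ideal.span {z I'} = I * P I' := hz I'
      have hdz : deg (Ideal.span {z I'}) = deg I + 1 := by
        rw [hz', deg_mul hI0 (hP I').1, (hP I').2]
      have hx0 : x ≠ 0 := by simpa using hJ0
      have hz0 : z I' ≠ 0 := by
        intro h
        rw [h] at hz'
        exact mul_ne_zero hI0 (hP I').1 (by rw [← hz']; simp)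
      have hs : Ideal.span {z I'} = Ideal.span {x} := by
        refine span_eq_of_nonprincipal hI0 hIn ?_ ?_ hdz (by rw [hJd, hId]) hz0 hx0
        · exact Ideal.mul_le_left (hz' ▸ Ideal.mem_span_singleton_self _)
        · exact Ideal.mul_le_left (hI ▸ Ideal.mem_span_singleton_self _)
      have hPQ : P I' = Q := by
        rw [hz', hI] at hs
        exact mul_left_cancel₀ hI0 hs
      refine ⟨I', ?_⟩
      subst hPQ
      exact Sigma.ext rfl (heq_of_eq (Subtype.ext hI.symm))
  have h2 : N.ncard = (effective W 1).ncard * Nat.card F ^ (d - 1) := by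
    rw [← Nat.card_coe_set_eq, Nat.card_congr (Equiv.ofBijective f hf), Nat.card_sigma]
    have : ∀ Q : effective W 1, Nat.card (principal (Q : Ideal 𝒪) (d + 1)) = Nat.card F ^ (d - 1) := by
      intro Q
      rw [Nat.card_coe_set_eq, ncard_principal Q.2.1 Q.2.2.le (by omega), Q.2.2]
      rfl
    rw [Finset.sum_congr rfl fun Q _ => this Q, Finset.sum_const, smul_eq_mul, Finset.card_univ,
      ← Nat.card_eq_fintype_card, Nat.card_coe_set_eq]
  rw [← h1, h2, add_comm]
  rfl

end Counting

/-! ### The logarithmic derivative of the Euler product -/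

section LogDerivative

variable {F : Type*} [Field F] {W : WeierstrassCurve F}

local notation "𝒪" => CoordinateRing W

open UniqueFactorizationMonoid

variable (W) in
/-- The closed points of the affine curve whose degree divides `n`, as nonzero prime ideals. -/
def closedPoints (n : ℕ) : Set (Ideal 𝒪) := {M | M.IsPrime ∧ M ≠ ⊥ ∧ deg M ∣ n}

variable (W) in
/-- The weighted count `∑ deg M` over closed points `M` of degree dividing `n`; it is the number of
affine points over the extension of degree `n`, by `card_algHom`. -/
noncomputable def geomCount (n : ℕ) : ℕ := ∑ᶠ M ∈ closedPoints W n, deg M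

theorem deg_pos {M : Ideal 𝒪} (hM : M.IsPrime) (h0 : M ≠ ⊥) : 0 < deg M := by
  by_contra! h
  exact hM.ne_top (eq_top_of_deg_eq_zero h0 (by omega))

/-- Reindexing a sum over `j` by the multiples `n = j e` of `e`. -/
theorem sum_range_multiples (f : ℕ → ℕ) {e : ℕ} (he : 0 < e) (d : ℕ) :
    ∑ j ∈ Finset.Icc 1 d, (if j * e ≤ d then f (d - j * e) else 0) =
      ∑ n ∈ Finset.Icc 1 d, if e ∣ n then f (d - n) else 0 := by
  rw [← Finset.sum_filter, ← Finset.sum_filter]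
  refine Finset.sum_nbij (fun j => j * e) ?_ ?_ ?_ fun _ _ => rfl
  · intro j hj
    simp only [Finset.mem_filter, Finset.mem_Icc] at hj ⊢
    exact ⟨⟨Nat.mul_pos (by omega) he, hj.2⟩, Dvd.intro_left j rfl⟩
  · intro i _ j _ h
    exact Nat.eq_of_mul_eq_mul_right he h
  · intro n hn
    simp only [Finset.coe_filter, Finset.mem_Icc, Set.mem_ofPred_eq] at hn
    obtain ⟨⟨h1, h2⟩, j, rfl⟩ := hn
    refine ⟨j, ?_, mul_comm _ _⟩
    simp only [Finset.coe_filter, Finset.mem_Icc, Set.mem_ofPred_eq]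
    have hj : j ≠ 0 := by rintro rfl; simp at h1
    exact ⟨⟨by omega, (Nat.le_mul_of_pos_left j he).trans h2⟩, by rwa [mul_comm]⟩

variable [Finite F] [IsDedekindDomain (CoordinateRing W)]

theorem primes_finite (d : ℕ) : {M : Ideal 𝒪 | M.IsPrime ∧ M ≠ ⊥ ∧ deg M ≤ d}.Finite := by
  refine ((Set.finite_Iic d).biUnion fun e _ => effective_finite (W := W) e).subset ?_
  rintro M ⟨-, h0, hd⟩
  simp only [Set.mem_iUnion]
  exact ⟨deg M, hd, h0, rfl⟩

theorem geomCount_eq_sum {n d : ℕ} (hn : 1 ≤ n) (hnd : n ≤ d) :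
    geomCount W n = ∑ M ∈ (primes_finite (W := W) d).toFinset, if deg M ∣ n then deg M else 0 := by
  classical
  rw [← Finset.sum_filter]
  refine finsum_mem_eq_sum_of_inter_support_eq _ ?_
  congr 1
  ext M
  simp only [closedPoints, Finset.coe_filter, Set.Finite.mem_toFinset, Set.mem_ofPred_eq]
  constructor
  · rintro ⟨h1, h2, h3⟩
    exact ⟨⟨h1, h2, (Nat.le_of_dvd hn h3).trans hnd⟩, h3⟩
  · rintro ⟨⟨h1, h2, -⟩, h3⟩
    exact ⟨h1, h2, h3⟩

theorem deg_multiset_prod (s : Multiset (Ideal 𝒪)) (hs : ∀ M ∈ s, M ≠ ⊥) :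
    s.prod ≠ ⊥ ∧ deg s.prod = (s.map deg).sum := by
  induction s using Multiset.induction_on with
  | empty => exact ⟨one_ne_zero, by rw [Multiset.prod_zero, Ideal.one_eq_top, deg_top]; rfl⟩
  | cons M s ih =>
    obtain ⟨h1, h2⟩ := ih fun N hN => hs N (Multiset.mem_cons_of_mem hN)
    have hM := hs M (Multiset.mem_cons_self M s)
    rw [Multiset.prod_cons, Multiset.map_cons, Multiset.sum_cons, deg_mul hM h1, h2]
    exact ⟨mul_ne_zero hM h1, rfl⟩

/-- The degree of an effective divisor, written as a sum over the prime powers dividing it. -/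
theorem deg_eq_sum {I : Ideal 𝒪} {d : ℕ} (hI : I ∈ effective W d) [∀ J : Ideal 𝒪, Decidable (J ∣ I)] :
    d = ∑ M ∈ (primes_finite (W := W) d).toFinset, ∑ j ∈ Finset.Icc 1 d,
      if M ^ j ∣ I then deg M else 0 := by
  classical
  obtain ⟨hI0, hId⟩ := hI
  have hprime : ∀ M ∈ normalizedFactors I, M.IsPrime ∧ M ≠ ⊥ := fun M hM =>
    ⟨Ideal.isPrime_of_prime (prime_of_normalized_factor M hM),
      (prime_of_normalized_factor M hM).ne_zero⟩
  have hprod : (normalizedFactors I).prod = I := by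
    rw [← associated_iff_eq]
    exact prod_normalizedFactors hI0
  have h1 : d = ((normalizedFactors I).map deg).sum := by
    rw [← (deg_multiset_prod _ fun M hM => (hprime M hM).2).2, hprod, hId]
  conv_lhs => rw [h1, Finset.sum_multiset_map_count]
  have hsub : (normalizedFactors I).toFinset ⊆ (primes_finite (W := W) d).toFinset := by
    intro M hM
    rw [Multiset.mem_toFinset] at hM
    rw [Set.Finite.mem_toFinset]
    refine ⟨(hprime M hM).1, (hprime M hM).2, ?_⟩
    rw [← hId]
    exact deg_le_deg hI0 (Ideal.le_of_dvd (dvd_of_mem_normalizedFactors hM))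
  rw [Finset.sum_subset hsub fun M _ hM => by
    rw [Multiset.mem_toFinset] at hM
    rw [Multiset.count_eq_zero_of_notMem hM, zero_smul]]
  refine Finset.sum_congr rfl fun M hM => ?_
  rw [Set.Finite.mem_toFinset] at hM
  obtain ⟨hMp, hM0, hMd⟩ := hM
  have hdvd : ∀ j, M ^ j ∣ I ↔ j ≤ (normalizedFactors I).count M := by
    intro j
    rw [pow_dvd_iff_le_emultiplicity, emultiplicity_eq_count_normalizedFactors
      (Ideal.prime_of_isPrime hM0 hMp).irreducible hI0, normalize_eq]
    exact Nat.cast_le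
  have hcount : (normalizedFactors I).count M ≤ d := by
    have h := deg_le_deg hI0 (Ideal.le_of_dvd ((hdvd _).mpr le_rfl))
    rw [deg_pow hM0, hId] at h
    exact (Nat.le_mul_of_pos_right _ (deg_pos hMp hM0)).trans h
  rw [← Finset.sum_filter, Finset.sum_const]
  congr 1
  have : (Finset.Icc 1 d).filter (fun j => M ^ j ∣ I) = Finset.Icc 1 ((normalizedFactors I).count M) := by
    ext j
    simp only [Finset.mem_filter, Finset.mem_Icc, hdvd]
    omega
  rw [this, Nat.card_Icc, Nat.add_sub_cancel]

/-- Multiplication by `P` identifies the ideals of degree `d - deg P` with those of degree `d` that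
`P` divides. -/
theorem card_filter_dvd {P : Ideal 𝒪} (hP : P ≠ ⊥) (d : ℕ) [∀ J : Ideal 𝒪, Decidable (P ∣ J)] :
    ((effective_finite (W := W) d).toFinset.filter (P ∣ ·)).card =
      if deg P ≤ d then (effective W (d - deg P)).ncard else 0 := by
  split_ifs with h
  · rw [Set.ncard_eq_toFinset_card _ (effective_finite _)]
    symm
    refine Finset.card_nbij (P * ·) ?_ ?_ ?_
    · rintro J hJ
      have hJ := (Set.Finite.mem_toFinset _).mp hJ
      refine Finset.mem_filter.mpr ⟨(Set.Finite.mem_toFinset _).mpr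
        ⟨mul_ne_zero hP hJ.1, ?_⟩, dvd_mul_right _ _⟩
      have hJd := hJ.2
      rw [deg_mul hP hJ.1]
      omega
    · intro I _ J _ hIJ
      exact mul_left_cancel₀ hP hIJ
    · intro I hI
      simp only [Finset.coe_filter, Set.Finite.mem_toFinset, Set.mem_ofPred_eq] at hI
      obtain ⟨⟨hI0, hId⟩, J, rfl⟩ := hI
      have hJ : J ≠ ⊥ := by rintro rfl; simp at hI0
      refine ⟨J, ?_, rfl⟩
      rw [deg_mul hP hJ] at hId
      simp only [Set.Finite.coe_toFinset]
      exact ⟨hJ, by omega⟩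
  · rw [Finset.card_eq_zero, Finset.filter_eq_empty_iff]
    intro I hI hPI
    rw [Set.Finite.mem_toFinset] at hI
    exact h (hI.2 ▸ deg_le_deg hI.1 (Ideal.le_of_dvd hPI))

/-- The logarithmic derivative of the Euler product `∑ b_d T^d = ∏_M (1 - T^(deg M))⁻¹`, obtained by
counting pairs consisting of an ideal of degree `d` and a prime power dividing it, weighted by the
degree of the prime. -/
theorem mul_ncard_effective (d : ℕ) :
    d * (effective W d).ncard =
      ∑ n ∈ Finset.Icc 1 d, geomCount W n * (effective W (d - n)).ncard := by
  classical
  have h1 : d * (effective W d).ncard = ∑ I ∈ (effective_finite (W := W) d).toFinset, d := by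
    rw [Finset.sum_const, smul_eq_mul, Set.ncard_eq_toFinset_card _ (effective_finite _), mul_comm]
  rw [h1, Finset.sum_congr rfl fun I hI => deg_eq_sum ((Set.Finite.mem_toFinset _).mp hI),
    Finset.sum_comm]
  have h2 : ∀ M ∈ (primes_finite (W := W) d).toFinset,
      (∑ I ∈ (effective_finite (W := W) d).toFinset, ∑ j ∈ Finset.Icc 1 d,
        if M ^ j ∣ I then deg M else 0) =
      ∑ n ∈ Finset.Icc 1 d, (if deg M ∣ n then deg M else 0) * (effective W (d - n)).ncard := by
    intro M hM
    rw [Set.Finite.mem_toFinset] at hM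
    obtain ⟨hMp, hM0, -⟩ := hM
    have h3 : ∀ j, (∑ I ∈ (effective_finite (W := W) d).toFinset, if M ^ j ∣ I then deg M else 0) =
        deg M * if j * deg M ≤ d then (effective W (d - j * deg M)).ncard else 0 := by
      intro j
      rw [← Finset.sum_filter, Finset.sum_const, card_filter_dvd (pow_ne_zero j hM0),
        deg_pow hM0, smul_eq_mul, mul_comm]
    rw [Finset.sum_comm, Finset.sum_congr rfl fun j _ => h3 j, ← Finset.mul_sum,
      sum_range_multiples (fun k => (effective W k).ncard) (deg_pos hMp hM0), Finset.mul_sum]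
    refine Finset.sum_congr rfl fun n _ => ?_
    split_ifs <;> simp
  rw [Finset.sum_congr rfl h2, Finset.sum_comm]
  refine Finset.sum_congr rfl fun n hn => ?_
  rw [Finset.mem_Icc] at hn
  rw [← Finset.sum_mul, geomCount_eq_sum hn.1 hn.2]

end LogDerivative

/-! ### Points over finite extensions -/

section Points

variable {F : Type*} [Field F] {W : WeierstrassCurve F}

local notation "𝒪" => CoordinateRing W

theorem equation_baseChange_iff {K : Type*} [Field K] [Algebra F K] (x y : K) :
    (W.baseChange K).toAffine.Equation x y ↔
      W.toAffine.polynomial.eval₂ (aeval x : F[X] →ₐ[F] K) y = 0 := by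
  rw [equation_iff']
  simp only [WeierstrassCurve.Affine.polynomial, WeierstrassCurve.baseChange, eval₂_sub, eval₂_add,
    eval₂_mul, eval₂_pow, eval₂_X, eval₂_C, RingHom.coe_coe, map_add, map_mul, map_pow, aeval_X,
    aeval_C, WeierstrassCurve.map_a₁, WeierstrassCurve.map_a₂, WeierstrassCurve.map_a₃,
    WeierstrassCurve.map_a₄, WeierstrassCurve.map_a₆]
  ring_nf

/-- Evaluation of regular functions at a `K`-rational affine point of `W`. -/
noncomputable def evalPoint {K : Type*} [Field K] [Algebra F K] {x y : K}
    (h : (W.baseChange K).toAffine.Equation x y) : 𝒪 →ₐ[F] K :=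
  AdjoinRoot.liftAlgHom W.toAffine.polynomial (aeval x) y ((equation_baseChange_iff _ _).mp h)

theorem evalPoint_of {K : Type*} [Field K] [Algebra F K] {x y : K}
    (h : (W.baseChange K).toAffine.Equation x y) :
    evalPoint h (AdjoinRoot.of W.toAffine.polynomial X) = x :=
  (AdjoinRoot.liftAlgHom_of _ _ _ _ _).trans (aeval_X _)

theorem evalPoint_root {K : Type*} [Field K] [Algebra F K] {x y : K}
    (h : (W.baseChange K).toAffine.Equation x y) :
    evalPoint h (AdjoinRoot.root W.toAffine.polynomial) = y :=
  AdjoinRoot.liftAlgHom_root _ _ _ _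

theorem equation_algHom {K : Type*} [Field K] [Algebra F K] (φ : 𝒪 →ₐ[F] K) :
    (W.baseChange K).toAffine.Equation (φ (AdjoinRoot.of W.toAffine.polynomial X))
      (φ (AdjoinRoot.root W.toAffine.polynomial)) := by
  rw [equation_baseChange_iff]
  have h : ((aeval (φ (AdjoinRoot.of W.toAffine.polynomial X)) : F[X] →ₐ[F] K) : F[X] →+* K) =
      (φ : 𝒪 →+* K).comp (AdjoinRoot.of W.toAffine.polynomial) := by
    ext c
    · rw [RingHom.comp_apply, RingHom.comp_apply, RingHom.coe_coe, aeval_C]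
      exact (φ.commutes c).symm
    · simp
  have := hom_eval₂ W.toAffine.polynomial (AdjoinRoot.of W.toAffine.polynomial) (φ : 𝒪 →+* K)
    (AdjoinRoot.root _)
  rw [AdjoinRoot.eval₂_root, map_zero, ← h] at this
  exact this.symm

variable (W) in
/-- The affine points of `W` with coordinates in `K` are the `F`-algebra homomorphisms from the
coordinate ring to `K`. -/
noncomputable def pointsEquivAlgHom (K : Type*) [Field K] [Algebra F K] :
    {xy : K × K // (W.baseChange K).toAffine.Equation xy.1 xy.2} ≃ (𝒪 →ₐ[F] K) where
  toFun P := evalPoint P.2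
  invFun φ := ⟨(_, _), equation_algHom φ⟩
  left_inv P := Subtype.ext (Prod.ext (evalPoint_of P.2) (evalPoint_root P.2))
  right_inv φ := by
    ext
    · exact evalPoint_of (equation_algHom φ)
    · exact evalPoint_root (equation_algHom φ)

variable [Finite F]

/-- The kernel of an `F`-algebra homomorphism to a finite field `K` is a closed point whose residue
field embeds in `K`. The kernel is nonzero because `L(m∞)` has dimension `m` for every `m ≥ 1`. -/
theorem ker_mem_closedPoints {K : Type*} [Field K] [Algebra F K] [Finite K] (φ : 𝒪 →ₐ[F] K) :
    RingHom.ker φ ∈ closedPoints W (Module.finrank F K) := by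
  have hp : (RingHom.ker φ).IsPrime := RingHom.ker_isPrime _
  have h0 : RingHom.ker φ ≠ ⊥ := by
    intro h
    have hinj : Function.Injective φ := (RingHom.injective_iff_ker_eq_bot _).mpr h
    have := LinearMap.finrank_le_finrank_of_injective
      (f := φ.toLinearMap ∘ₗ (L W (Module.finrank F K + 1)).subtype)
      (hinj.comp Subtype.val_injective)
    rw [finrank_L (by omega)] at this
    omega
  refine ⟨hp, h0, ?_⟩
  have := finite_quotient h0
  have : Finite (𝒪 ⧸ RingHom.ker φ) := Module.finite_of_finite F
  let := Fintype.ofFinite (𝒪 ⧸ RingHom.ker φ)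
  have hm : (RingHom.ker φ).IsMaximal :=
    Ideal.Quotient.maximal_of_isField _ (Finite.isField_of_domain _)
  let := Ideal.Quotient.field (RingHom.ker φ)
  exact FiniteField.nonempty_algHom_iff_finrank_dvd.mp ⟨Ideal.kerLiftAlg φ⟩

/-- The homomorphisms with kernel `M` are the embeddings in `K` of the residue field of `M`; when
they exist there are `deg M` of them. -/
theorem card_algHom_ker_eq {K : Type*} [Field K] [Algebra F K] [Finite K] {M : Ideal 𝒪}
    (hM : M ∈ closedPoints W (Module.finrank F K)) :
    Nat.card {φ : 𝒪 →ₐ[F] K // RingHom.ker φ = M} = deg M := by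
  obtain ⟨hp, h0, hd⟩ := hM
  have := finite_quotient h0
  have : Finite (𝒪 ⧸ M) := Module.finite_of_finite F
  have hm : M.IsMaximal := Ideal.Quotient.maximal_of_isField _ (Finite.isField_of_domain _)
  let := Ideal.Quotient.field M
  rw [deg, ← FiniteField.natCard_algHom_of_finrank_dvd hd]
  refine Nat.card_congr
    { toFun := fun φ => Ideal.Quotient.liftₐ M φ.1 fun a ha => by
        rw [← φ.2] at ha; exact ha
      invFun := fun ψ => ⟨ψ.comp (Ideal.Quotient.mkₐ F M), ?_⟩
      left_inv := fun φ => Subtype.ext (AlgHom.ext fun a => rfl)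
      right_inv := fun ψ => Ideal.Quotient.algHom_ext _ (AlgHom.ext fun a => rfl) }
  ext a
  rw [RingHom.mem_ker]
  change ψ (Ideal.Quotient.mk M a) = 0 ↔ _
  rw [map_eq_zero_iff ψ ψ.toRingHom.injective, Ideal.Quotient.eq_zero_iff_mem]

variable [IsDedekindDomain (CoordinateRing W)]

/-- Sorting the homomorphisms `𝒪 → K` by their kernels. -/
theorem card_algHom (K : Type*) [Field K] [Algebra F K] [Finite K] :
    Nat.card (𝒪 →ₐ[F] K) = geomCount W (Module.finrank F K) := by
  have hn : 1 ≤ Module.finrank F K := Module.finrank_pos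
  have hfin : (closedPoints W (Module.finrank F K)).Finite :=
    (primes_finite (W := W) (Module.finrank F K)).subset
      fun M hM => ⟨hM.1, hM.2.1, Nat.le_of_dvd hn hM.2.2⟩
  have := hfin.fintype
  let f : (𝒪 →ₐ[F] K) → closedPoints W (Module.finrank F K) := fun φ => ⟨_, ker_mem_closedPoints φ⟩
  have hf : ∀ M, Nat.card {φ // f φ = M} = deg M.1 := fun M => by
    rw [← card_algHom_ker_eq M.2]
    exact Nat.card_congr (Equiv.subtypeEquivRight fun φ => Subtype.ext_iff)
  have : ∀ M, Finite {φ // f φ = M} := fun M => by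
    refine Nat.finite_of_card_ne_zero ?_
    rw [hf]
    exact (deg_pos M.2.1 M.2.2.1).ne'
  rw [← Nat.card_congr (Equiv.sigmaFiberEquiv f), Nat.card_sigma, geomCount,
    finsum_mem_eq_finite_toFinset_sum _ hfin, Finset.sum_congr rfl fun M _ => hf M]
  exact (Finset.sum_subtype _ (fun M => Set.Finite.mem_toFinset hfin) deg).symm

theorem card_point (hW : W.Δ ≠ 0) (K : Type*) [Field K] [Algebra F K] [Finite K] :
    Nat.card (W.baseChange K).toAffine.Point = 1 + geomCount W (Module.finrank F K) := by
  have hΔ : (W.baseChange K).Δ ≠ 0 := by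
    rw [WeierstrassCurve.baseChange, WeierstrassCurve.map_Δ]
    exact (_root_.map_ne_zero _).mpr hW
  rw [← card_algHom K, ← Nat.card_congr (pointsEquivAlgHom W K),
    Nat.card_congr (nonsingularPointEquiv (W' := (W.baseChange K).toAffine))]
  simp_rw [← equation_iff_nonsingular_of_Δ_ne_zero hΔ]
  rw [add_comm]
  exact Finite.card_option

end Points

/-! ### Comparison of the two recursions -/

section Recursion

/-- The relation `d b_d = ∑_{n=1}^d N_n b_{d-n}`, that is `T B' = N B` for generating series,
determines `N_n` for `n ≥ 1`. -/
theorem eq_of_recursion {b N N' : ℕ → ℂ} (hb : b 0 = 1)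
    (hN : ∀ d : ℕ, d * b d = ∑ n ∈ Finset.Icc 1 d, N n * b (d - n))
    (hN' : ∀ d : ℕ, d * b d = ∑ n ∈ Finset.Icc 1 d, N' n * b (d - n)) {n : ℕ} (hn : 1 ≤ n) :
    N n = N' n := by
  induction n using Nat.strong_induction_on with
  | _ n ih =>
    have h := (hN n).symm.trans (hN' n)
    obtain ⟨m, rfl⟩ : ∃ m, n = m + 1 := ⟨n - 1, by omega⟩
    have hs : ∑ k ∈ Finset.Icc 1 m, N k * b (m + 1 - k) =
        ∑ k ∈ Finset.Icc 1 m, N' k * b (m + 1 - k) := by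
      refine Finset.sum_congr rfl fun k hk => ?_
      rw [Finset.mem_Icc] at hk
      rw [ih k (by omega) hk.1]
    rw [Finset.sum_Icc_succ_top hn, Finset.sum_Icc_succ_top hn, Nat.sub_self, hb, mul_one,
      mul_one, hs] at h
    exact add_left_cancel h

theorem sum_Icc_pow_mul_succ (b : ℕ → ℂ) (t : ℂ) (d : ℕ) :
    ∑ n ∈ Finset.Icc 1 (d + 1), t ^ n * b (d + 1 - n) =
      t * (b d + ∑ n ∈ Finset.Icc 1 d, t ^ n * b (d - n)) := by
  have h : ∀ (f : ℕ → ℂ) (m : ℕ), ∑ n ∈ Finset.Icc 1 m, f n = ∑ n ∈ Finset.range m, f (n + 1) := by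
    intro f m
    rw [Finset.range_eq_Ico, Finset.sum_Ico_add' f 0 m 1]
    rfl
  rw [h, Finset.sum_range_succ', h, mul_add, Finset.mul_sum, add_comm]
  congr 1
  · simp
  · refine Finset.sum_congr rfl fun n _ => ?_
    rw [Nat.add_sub_add_right]
    ring

/-- If `∑ b_d T^d = (1 - τT)(1 - τ'T) / (1 - qT)`, then the logarithmic derivative of this series
is `∑ (qⁿ - τⁿ - τ'ⁿ) Tⁿ`. -/
theorem recursion_of_zeta {b : ℕ → ℂ} {q τ τ' : ℂ} (hb0 : b 0 = 1) (hb1 : b 1 = q - (τ + τ'))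
    (hq : τ * τ' = q) (hb : ∀ d, 2 ≤ d → b d = q ^ (d - 1) + b 1 * q ^ (d - 1)) (d : ℕ) :
    d * b d = ∑ n ∈ Finset.Icc 1 d, (q ^ n - (τ ^ n + τ' ^ n)) * b (d - n) := by
  -- `b_d + ∑ tⁿ b_{d-n}` is the coefficient of `(1 - sT) / (1 - qT)` when `{t, s} = {τ, τ'}`
  have h1 : ∀ t s : ℂ, t * s = q → t + s = τ + τ' → ∀ m,
      b (m + 1) + ∑ n ∈ Finset.Icc 1 (m + 1), t ^ n * b (m + 1 - n) = q ^ (m + 1) - s * q ^ m := by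
    intro t s hts hs m
    induction m with
    | zero => simp [hb0, hb1, ← hs]; ring
    | succ m ih =>
      rw [sum_Icc_pow_mul_succ, ih, hb _ (by omega), hb1, ← hs, Nat.add_sub_cancel]
      linear_combination (-q ^ m) * hts
  have h2 : ∀ m, ∑ n ∈ Finset.Icc 1 (m + 1), q ^ n * b (m + 1 - n) =
      (m + 2) * q ^ (m + 1) - (τ + τ') * (m + 1) * q ^ m + m * q ^ m - b (m + 1) := by
    intro m
    induction m with
    | zero => simp [hb0, hb1]; ring
    | succ m ih =>
      rw [sum_Icc_pow_mul_succ, ih, hb (m + 1 + 1) (by omega), hb1, Nat.add_sub_cancel]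
      push_cast
      ring
  have h3 : ∑ n ∈ Finset.Icc 1 d, (q ^ n - (τ ^ n + τ' ^ n)) * b (d - n) =
      ∑ n ∈ Finset.Icc 1 d, q ^ n * b (d - n) - (∑ n ∈ Finset.Icc 1 d, τ ^ n * b (d - n) +
        ∑ n ∈ Finset.Icc 1 d, τ' ^ n * b (d - n)) := by
    rw [← Finset.sum_add_distrib, ← Finset.sum_sub_distrib]
    exact Finset.sum_congr rfl fun _ _ => by ring
  rw [h3]
  rcases d with _ | m
  · simp
  have e1 := h1 τ τ' hq rfl m
  have e2 := h1 τ' τ (by rw [mul_comm, hq]) (add_comm _ _) m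
  have e3 := h2 m
  rcases m with _ | m
  · simp [hb0, hb1]
  · have hbm := hb (m + 1 + 1) (by omega)
    rw [hb1, Nat.add_sub_cancel] at hbm
    rw [e3]
    push_cast at *
    linear_combination (m + 1) * hbm + e1 + e2

end Recursion

end PointCount

theorem point_count_over_extensions (p : ℕ) [Fact p.Prime]
    (W : WeierstrassCurve (ZMod p)) (hW : W.Δ ≠ 0)
    (a : ℤ) (hcount : (Nat.card W.toAffine.Point : ℤ) = p + 1 - a)
    (τ τ' : ℂ) (hsum : τ + τ' = a) (hprod : τ * τ' = p) :
    ∀ n : ℕ, 1 ≤ n →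
      (Nat.card ((W.baseChange (GaloisField p n)).toAffine.Point) : ℂ) =
        (p : ℂ) ^ n + 1 - (τ ^ n + τ' ^ n) := by
  intro n hn
  have : IsDedekindDomain W.toAffine.CoordinateRing := PointCount.isDedekindDomain hW
  -- the number of effective divisors of degree `d` on the affine curve
  let b : ℕ → ℂ := fun d => (PointCount.effective W d).ncard
  have hb0 : b 0 = 1 := by simp [b, PointCount.effective_zero]
  have hrec (d : ℕ) : d * b d = ∑ n ∈ Finset.Icc 1 d, (PointCount.geomCount W n : ℂ) * b (d - n) := by
    simp only [b]
    exact mod_cast PointCount.mul_ncard_effective (W := W) d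
  have hb1 : b 1 = p - (τ + τ') := by
    have h1 := hrec 1
    have h2 := PointCount.card_point hW (ZMod p)
    rw [show W.baseChange (ZMod p) = W from W.map_id, Module.finrank_self] at h2
    have h3 : (Nat.card W.toAffine.Point : ℂ) = p + 1 - a := mod_cast hcount
    rw [h2] at h3
    push_cast at h3
    simp only [Nat.cast_one, one_mul, Finset.Icc_self, Finset.sum_singleton, Nat.sub_self, hb0,
      mul_one] at h1
    rw [h1, hsum]
    linear_combination h3
  have hb (d : ℕ) (hd : 2 ≤ d) : b d = (p : ℂ) ^ (d - 1) + b 1 * (p : ℂ) ^ (d - 1) := by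
    have := PointCount.ncard_effective (W := W) hd
    rw [Nat.card_zmod] at this
    simp only [b]
    exact mod_cast this
  have hcard := PointCount.card_point hW (GaloisField p n)
  rw [GaloisField.finrank p (by omega)] at hcard
  rw [hcard, Nat.cast_add, PointCount.eq_of_recursion hb0 hrec (PointCount.recursion_of_zeta hb0 hb1 hprod hb) hn]
  push_cast
  ring
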